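/- arXiv:2105.07247 — 2 statements merged into one kernel-verified Lean document; each statement's English description precedes it below -/
import Mathlib

section
/- Let G be a finite group, N a normal subgroup with Q = G/N abelian, q ∈ G, and ρ an irreducible complex character of G. Let Stab(ρ) ⊆ Q̂ be the stabilizer of ρ under the tensoring action. If qN does not lie in the intersection of the kernels of all χ ∈ Stab(ρ), then the class function π_q ⊗ ρ is identically zero; otherwise its self inner product ⟨π_q ⊗ ρ, π_q ⊗ ρ⟩ = (1/#G) Σ_{g∈G} (π_q⊗ρ)(g) · conj((π_q⊗ρ)(g)) equals 1/#[ρ], where #[ρ] is the size of the Q̂-orbit of ρ. -/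
open scoped BigOperators

/-- `ρ : G → ℂ` is the character of an irreducible (simple) finite-dimensional
complex representation of `G`. -/
def IsIrrChar (G : Type) [Group G] (ρ : G → ℂ) : Prop :=
  ∃ V : FDRep ℂ G, CategoryTheory.Simple V ∧ ρ = V.character

/-- `Θ : G → ℂ` is the character of some finite-dimensional complex representation of `G`. -/
def IsChar (G : Type) [Group G] (Θ : G → ℂ) : Prop :=
  ∃ V : FDRep ℂ G, Θ = V.character

variable {G : Type} [Group G]

/-- The action of a character `χ ∈ Q̂` (where `Q = G ⧸ N`) on a function `ρ : G → ℂ`: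
`(χ · ρ)(g) = χ(gN) · ρ(g)`. -/
def charMul (N : Subgroup G) [N.Normal] (χ : (G ⧸ N) →* ℂˣ) (ρ : G → ℂ) : G → ℂ :=
  fun g => (χ (g : G ⧸ N) : ℂ) * ρ g

/-- The orbit of `ρ` under the tensoring action of `Q̂ = Hom(G ⧸ N, ℂˣ)`. -/
def qhatOrbit (N : Subgroup G) [N.Normal] (ρ : G → ℂ) : Set (G → ℂ) :=
  {ρ' | ∃ χ : (G ⧸ N) →* ℂˣ, ρ' = charMul N χ ρ}

/-- The coset `qN`, as a subset of `G`. -/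
def coset (N : Subgroup G) [N.Normal] (q : G) : Set G :=
  {g | (g : G ⧸ N) = (q : G ⧸ N)}

/-- `C_q`: the set of conjugacy classes of `G` contained in the coset `qN`. -/
def Cset (N : Subgroup G) [N.Normal] (q : G) : Set (ConjClasses G) :=
  {c | c.carrier ⊆ coset N q}

/-- `R_q`: the set of `Q̂`-orbits on the irreducible characters of `G`
containing a character not identically zero on `qN`. -/
def Rset (N : Subgroup G) [N.Normal] (q : G) : Set (Set (G → ℂ)) :=
  {S | (∃ ρ, IsIrrChar G ρ ∧ S = qhatOrbit N ρ) ∧ ∃ ρ' ∈ S, ∃ g ∈ coset N q, ρ' g ≠ 0}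

/-- The class function `π_x` for `x ∈ Q = G ⧸ N`:
`π_x(g) = (1/#Q̂) ∑_{χ ∈ Q̂} conj(χ(x)) χ(gN)`. -/
noncomputable def piQ (N : Subgroup G) [N.Normal] (x : G ⧸ N) : G → ℂ :=
  fun g => (Nat.card ((G ⧸ N) →* ℂˣ) : ℂ)⁻¹ *
    ∑ᶠ χ : (G ⧸ N) →* ℂˣ, (starRingEnd ℂ) (χ x : ℂ) * (χ (g : G ⧸ N) : ℂ)

/-- The space of class functions on `G`, as a submodule of `G → ℂ`. -/
noncomputable def classFunSubmodule (G : Type) [Group G] : Submodule ℂ (G → ℂ) where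
  carrier := {f | ∀ g h : G, f (h * g * h⁻¹) = f g}
  add_mem' := by intro a b ha hb g h; simp only [Pi.add_apply, ha g h, hb g h]
  zero_mem' := by intro g h; rfl
  smul_mem' := by intro c f hf g h; simp only [Pi.smul_apply, hf g h]

/-- The space of class functions on `G` vanishing outside the coset `qN`. -/
noncomputable def cosetClassFun (N : Subgroup G) [N.Normal] (q : G) : Submodule ℂ (G → ℂ) where
  carrier := {f | (∀ g h : G, f (h * g * h⁻¹) = f g) ∧ ∀ g, g ∉ coset N q → f g = 0}
  add_mem' := by
    intro a b ha hb
    exact ⟨fun g h => by simp only [Pi.add_apply, ha.1 g h, hb.1 g h],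
      fun g hg => by simp only [Pi.add_apply, ha.2 g hg, hb.2 g hg, add_zero]⟩
  zero_mem' := ⟨fun g h => rfl, fun g hg => rfl⟩
  smul_mem' := by
    intro c f hf
    exact ⟨fun g h => by simp only [Pi.smul_apply, hf.1 g h],
      fun g hg => by simp only [Pi.smul_apply, hf.2 g hg, smul_zero]⟩

/-!
By orthogonality on `Q̂`, the function `π_q` is the indicator function of the set of `g` such that
`χ(g) = χ(q)` for all `χ ∈ Q̂`. If `χ ∈ Stab(ρ)`, then `χ = 1` wherever `ρ ≠ 0`, so `χ(q) ≠ 1` makes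
the supports of `π_q` and `ρ` disjoint. In general `π_q` is real and idempotent, so
`⟨π_q ⊗ ρ, π_q ⊗ ρ⟩ = ⟨π_q ⊗ ρ, ρ⟩` is the average over `χ ∈ Q̂` of `conj(χ(q)) ⟨χ · ρ, ρ⟩`. Each
`χ · ρ` is irreducible, so only `χ ∈ Stab(ρ)` contribute, and if all of them are trivial on `q` the
average is `#Stab(ρ) / #Q̂ = 1 / #[ρ]`.

Irreducible characters are orthonormal for `⟨·, ·⟩` because `ρ(g⁻¹) = conj(ρ(g))`: an endomorphism
of finite order is diagonalizable, and its eigenvalues are roots of unity.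
-/

section Diagonalizable

open Module

variable {K V : Type*} [Field K] [AddCommGroup V] [Module K V]

theorem isOfFinOrder_of_hasEigenvalue {f : End K V} (hf : IsOfFinOrder f) {μ : K}
    (hμ : f.HasEigenvalue μ) : IsOfFinOrder μ := by
  obtain ⟨n, hn, hfn⟩ := isOfFinOrder_iff_pow_eq_one.mp hf
  obtain ⟨v, hv⟩ := hμ.exists_hasEigenvector
  have hpow : (1 : K) • v = μ ^ n • v := by rw [← hv.pow_apply, hfn, one_smul, End.one_apply]
  exact isOfFinOrder_iff_pow_eq_one.mpr ⟨n, hn, (smul_left_injective K hv.2 hpow).symm⟩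

variable [FiniteDimensional K V]

theorem trace_eq_sum_finrank_eigenspace {f g : End K V} (hf : ⨆ μ, f.eigenspace μ = ⊤)
    {c : K → K} (hg : ∀ μ, ∀ v ∈ f.eigenspace μ, g v = c μ • v) :
    LinearMap.trace K V g =
      ∑ μ : f.Eigenvalues, c μ * (finrank K (f.eigenspace μ) : K) := by
  classical
  have hint : DirectSum.IsInternal fun μ : f.Eigenvalues ↦ f.eigenspace μ :=
    DirectSum.isInternal_ne_bot_iff.mpr <|
      DirectSum.isInternal_submodule_of_iSupIndep_of_iSup_eq_top f.eigenspaces_iSupIndep hf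
  have hmaps (μ : f.Eigenvalues) : Set.MapsTo g (f.eigenspace μ) (f.eigenspace μ) := fun v hv ↦ by
    rw [hg μ v hv]
    exact Submodule.smul_mem _ _ hv
  have hscalar (μ : f.Eigenvalues) : g.restrict (hmaps μ) = c μ • LinearMap.id :=
    LinearMap.ext fun v ↦ Subtype.ext (hg μ v v.2)
  rw [LinearMap.trace_eq_sum_trace_restrict hint hmaps]
  simp only [hscalar, map_smul, LinearMap.trace_id, smul_eq_mul]

theorem iSup_eigenspace_eq_top_of_isOfFinOrder [IsAlgClosed K] [CharZero K] {f : End K V}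
    (hf : IsOfFinOrder f) : ⨆ μ, f.eigenspace μ = ⊤ := by
  obtain ⟨n, hn, hfn⟩ := isOfFinOrder_iff_pow_eq_one.mp hf
  have hsep : (Polynomial.X ^ n - 1 : Polynomial K).Separable :=
    Polynomial.X_pow_sub_one_separable_iff.mpr (Nat.cast_ne_zero.mpr hn.ne')
  have hss : f.IsSemisimple :=
    End.isSemisimple_of_squarefree_aeval_eq_zero hsep.squarefree (by simp [hfn])
  simpa only [hss.isFinitelySemisimple.maxGenEigenspace_eq_eigenspace] using
    End.iSup_maxGenEigenspace_eq_top f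

end Diagonalizable

section FiniteOrder

open Module

theorem conj_eq_inv_of_isOfFinOrder {z : ℂ} (hz : IsOfFinOrder z) : starRingEnd ℂ z = z⁻¹ :=
  (Complex.inv_eq_conj hz.norm_eq_one).symm

theorem conj_coe_monoidHom_apply {Q : Type*} [Monoid Q] (χ : Q →* ℂˣ) {x : Q}
    (hx : IsOfFinOrder x) : starRingEnd ℂ (χ x : ℂ) = (χ x : ℂ)⁻¹ :=
  conj_eq_inv_of_isOfFinOrder (((Units.coeHom ℂ).comp χ).isOfFinOrder hx)

theorem trace_inv_eq_conj_of_isOfFinOrder {V : Type*} [AddCommGroup V] [Module ℂ V]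
    [FiniteDimensional ℂ V] (u : (End ℂ V)ˣ) (hu : IsOfFinOrder u) :
    LinearMap.trace ℂ V ↑u⁻¹ = starRingEnd ℂ (LinearMap.trace ℂ V ↑u) := by
  have hf : IsOfFinOrder (u : End ℂ V) := (Units.coeHom (End ℂ V)).isOfFinOrder hu
  have htop := iSup_eigenspace_eq_top_of_isOfFinOrder hf
  have hinv (μ : ℂ) (v : V) (hv : v ∈ (u : End ℂ V).eigenspace μ) :
      (↑u⁻¹ : End ℂ V) v = starRingEnd ℂ μ • v := by
    rcases eq_or_ne v 0 with rfl | hv0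
    · simp
    have hμ := isOfFinOrder_of_hasEigenvalue hf (End.hasEigenvalue_of_hasEigenvector ⟨hv, hv0⟩)
    have huv : (↑u⁻¹ : End ℂ V) (μ • v) = v := by
      rw [← End.mem_eigenspace_iff.mp hv, ← End.mul_apply, u.inv_mul, End.one_apply]
    rw [conj_eq_inv_of_isOfFinOrder hμ, eq_inv_smul_iff₀ hμ.isUnit.ne_zero, ← map_smul, huv]
  rw [trace_eq_sum_finrank_eigenspace htop hinv,
    trace_eq_sum_finrank_eigenspace htop fun _ _ ↦ End.mem_eigenspace_iff.mp]
  simp only [map_sum, map_mul, map_natCast]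

end FiniteOrder

theorem IsChar.map_inv {Θ : G → ℂ} (hΘ : IsChar G Θ) {g : G} (hg : IsOfFinOrder g) :
    Θ g⁻¹ = starRingEnd ℂ (Θ g) := by
  obtain ⟨V, rfl⟩ := hΘ
  let ρ : G →* (Module.End ℂ V)ˣ := MonoidHom.toHomUnits V.ρ
  have htrace := trace_inv_eq_conj_of_isOfFinOrder (ρ g) (ρ.isOfFinOrder hg)
  rwa [← _root_.map_inv] at htrace

theorem isChar_coe_monoidHom (χ : G →* ℂˣ) : IsChar G fun g ↦ (χ g : ℂ) := by
  let τ : Representation ℂ G ℂ :=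
    (Algebra.lmul ℂ ℂ).toMonoidHom.comp ((Units.coeHom ℂ).comp χ)
  exact ⟨FDRep.of τ, funext fun g ↦ (Algebra.trace_self_apply (R := ℂ) (χ g : ℂ)).symm⟩

theorem IsIrrChar.isChar {ρ : G → ℂ} (hρ : IsIrrChar G ρ) : IsChar G ρ :=
  let ⟨V, _, hV⟩ := hρ
  ⟨V, hV⟩

open scoped CategoryTheory.MonoidalCategory in
theorem IsIrrChar.monoidHom_mul [Finite G] {ρ : G → ℂ} (hρ : IsIrrChar G ρ) (χ : G →* ℂˣ) :
    IsIrrChar G fun g ↦ (χ g : ℂ) * ρ g := by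
  have := Fintype.ofFinite G
  obtain ⟨V, hV, rfl⟩ := hρ
  obtain ⟨W, hW⟩ := isChar_coe_monoidHom χ
  have hchar : (fun g ↦ (χ g : ℂ) * V.character g) = (W ⊗ V).character := by
    rw [FDRep.char_tensor, ← hW]
    rfl
  refine ⟨W ⊗ V, ?_, hchar⟩
  rw [FDRep.simple_iff_char_is_norm_one] at hV ⊢
  rw [← hV, ← hchar]
  refine Finset.sum_congr rfl fun g _ ↦ ?_
  rw [mul_mul_mul_comm, ← Units.val_mul, ← map_mul, mul_inv_cancel, map_one, Units.val_one, one_mul]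

section ClassInner

variable [Fintype G]

/-- The inner product `⟨f₁, f₂⟩` of complex functions on a finite group, normalized by the order of
the group and conjugate-linear in the second argument. -/
noncomputable def classInner (f₁ f₂ : G → ℂ) : ℂ :=
  (Fintype.card G : ℂ)⁻¹ * ∑ g : G, f₁ g * starRingEnd ℂ (f₂ g)

open Classical in
theorem IsIrrChar.classInner_eq_ite {ρ σ : G → ℂ} (hρ : IsIrrChar G ρ) (hσ : IsIrrChar G σ) :
    classInner ρ σ = if ρ = σ then 1 else 0 := by
  have hconj (g : G) : starRingEnd ℂ (σ g) = σ g⁻¹ :=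
    (hσ.isChar.map_inv (isOfFinOrder_of_finite g)).symm
  obtain ⟨V, _, rfl⟩ := hρ
  obtain ⟨W, _, rfl⟩ := hσ
  have : Invertible (Nat.card G : ℂ) := invertibleOfNonzero (NeZero.ne _)
  simp only [classInner, hconj, ← Nat.card_eq_fintype_card]
  split_ifs with h
  · simpa only [h, if_pos (Nonempty.intro (CategoryTheory.Iso.refl W))] using
      FDRep.char_orthonormal W W
  · rw [FDRep.char_orthonormal, if_neg fun ⟨i⟩ ↦ h (FDRep.char_iso i)]

end ClassInner

section Tensoring

variable (N : Subgroup G) [N.Normal]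

theorem IsIrrChar.isIrrChar_charMul [Finite G] {ρ : G → ℂ} (hρ : IsIrrChar G ρ)
    (χ : (G ⧸ N) →* ℂˣ) : IsIrrChar G (charMul N χ ρ) :=
  hρ.monoidHom_mul (χ.comp (QuotientGroup.mk' N))

/-- The tensoring action of `Q̂` on functions on `G`, whose orbits are the sets
`qhatOrbit N ρ`. -/
abbrev charMulAction : MulAction ((G ⧸ N) →* ℂˣ) (G → ℂ) where
  smul := charMul N
  one_smul ρ := funext fun g ↦ one_mul (ρ g)
  mul_smul χ ψ ρ := funext fun g ↦ mul_assoc (χ g : ℂ) (ψ g) (ρ g)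

theorem ncard_qhatOrbit_mul_card_stabilizer (ρ : G → ℂ) :
    (qhatOrbit N ρ).ncard * Nat.card {χ : (G ⧸ N) →* ℂˣ // charMul N χ ρ = ρ} =
      Nat.card ((G ⧸ N) →* ℂˣ) := by
  let _ := charMulAction N
  have horbit : qhatOrbit N ρ = MulAction.orbit ((G ⧸ N) →* ℂˣ) ρ :=
    Set.ext fun _ ↦ exists_congr fun _ ↦ eq_comm
  rw [horbit, ← Nat.card_coe_set_eq, ← Nat.card_prod]
  exact Nat.card_congr (MulAction.orbitProdStabilizerEquivGroup _ ρ)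

end Tensoring

section PiQ

variable (N : Subgroup G) [N.Normal]

open Classical in
theorem piQ_eq_ite [Finite (G ⧸ N)] (x : G ⧸ N) (g : G) :
    piQ N x g = if ∀ χ : (G ⧸ N) →* ℂˣ, χ x = χ g then 1 else 0 := by
  have := Fintype.ofFinite ((G ⧸ N) →* ℂˣ)
  let ev : ((G ⧸ N) →* ℂˣ) →* ℂ := (Units.coeHom ℂ).comp (MonoidHom.eval (x⁻¹ * g))
  have hev (χ : (G ⧸ N) →* ℂˣ) : starRingEnd ℂ (χ x : ℂ) * (χ g : ℂ) = ev χ := by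
    simp [ev, conj_coe_monoidHom_apply χ (isOfFinOrder_of_finite x)]
  have hev_one : ev = 1 ↔ ∀ χ : (G ⧸ N) →* ℂˣ, χ x = χ g := by
    simp [ev, MonoidHom.ext_iff, inv_mul_eq_one₀, Units.ext_iff]
  simp only [piQ, finsum_eq_sum_of_fintype, hev, sum_hom_units, hev_one,
    Nat.card_eq_fintype_card]
  split_ifs <;> simp

theorem piQ_mul_eq_zero [Finite (G ⧸ N)] {x : G ⧸ N} {f : G → ℂ} {χ : (G ⧸ N) →* ℂˣ}
    (hχ : charMul N χ f = f) (hx : χ x ≠ 1) (g : G) : piQ N x g * f g = 0 := by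
  rcases eq_or_ne (f g) 0 with hfg | hfg
  · rw [hfg, mul_zero]
  have hχg : χ g = 1 := Units.ext (mul_eq_right₀ hfg |>.mp (congrFun hχ g))
  rw [piQ_eq_ite, if_neg fun h ↦ hx ((h χ).trans hχg), zero_mul]

theorem piQ_mul_conj_piQ [Finite (G ⧸ N)] (x : G ⧸ N) (g : G) :
    piQ N x g * starRingEnd ℂ (piQ N x g) = piQ N x g := by
  rw [piQ_eq_ite]
  split_ifs <;> simp

variable [Fintype G]

theorem classInner_piQ_mul_piQ_mul (x : G ⧸ N) (f₁ f₂ : G → ℂ) :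
    classInner (fun g ↦ piQ N x g * f₁ g) (fun g ↦ piQ N x g * f₂ g) =
      classInner (fun g ↦ piQ N x g * f₁ g) f₂ := by
  have hpointwise (g : G) : piQ N x g * f₁ g * starRingEnd ℂ (piQ N x g * f₂ g) =
      piQ N x g * f₁ g * starRingEnd ℂ (f₂ g) := by
    rw [map_mul, mul_mul_mul_comm, piQ_mul_conj_piQ, mul_assoc]
  simp only [classInner, hpointwise]

theorem classInner_piQ_mul [Fintype ((G ⧸ N) →* ℂˣ)] (x : G ⧸ N) (f₁ f₂ : G → ℂ) :
    classInner (fun g ↦ piQ N x g * f₁ g) f₂ =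
      (Nat.card ((G ⧸ N) →* ℂˣ) : ℂ)⁻¹ *
        ∑ χ : (G ⧸ N) →* ℂˣ, starRingEnd ℂ (χ x : ℂ) * classInner (charMul N χ f₁) f₂ := by
  simp only [classInner, piQ, charMul, finsum_eq_sum_of_fintype, Finset.mul_sum, Finset.sum_mul]
  rw [Finset.sum_comm]
  refine Finset.sum_congr rfl fun χ _ ↦ Finset.sum_congr rfl fun g _ ↦ ?_
  ring

end PiQ

open Classical in
theorem IsIrrChar.conj_mul_classInner_charMul [Fintype G] (N : Subgroup G) [N.Normal] {x : G ⧸ N}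
    {ρ : G → ℂ} (hρ : IsIrrChar G ρ)
    (hx : ∀ χ : (G ⧸ N) →* ℂˣ, charMul N χ ρ = ρ → χ x = 1) (χ : (G ⧸ N) →* ℂˣ) :
    starRingEnd ℂ (χ x : ℂ) * classInner (charMul N χ ρ) ρ =
      if charMul N χ ρ = ρ then 1 else 0 := by
  rw [(hρ.isIrrChar_charMul N χ).classInner_eq_ite hρ]
  split_ifs with hχ
  · simp [hx χ hχ]
  · rw [mul_zero]

theorem IsIrrChar.classInner_piQ_mul_self [Fintype G] (N : Subgroup G) [N.Normal] {x : G ⧸ N}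
    {ρ : G → ℂ} (hρ : IsIrrChar G ρ)
    (hx : ∀ χ : (G ⧸ N) →* ℂˣ, charMul N χ ρ = ρ → χ x = 1) :
    classInner (fun g ↦ piQ N x g * ρ g) (fun g ↦ piQ N x g * ρ g) =
      ((qhatOrbit N ρ).ncard : ℂ)⁻¹ := by
  classical
  have := Fintype.ofFinite ((G ⧸ N) →* ℂˣ)
  let stab : ℕ := Nat.card {χ : (G ⧸ N) →* ℂˣ // charMul N χ ρ = ρ}
  have horbit : (qhatOrbit N ρ).ncard * stab = Nat.card ((G ⧸ N) →* ℂˣ) :=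
    ncard_qhatOrbit_mul_card_stabilizer N ρ
  have hstab : (stab : ℂ) ≠ 0 :=
    Nat.cast_ne_zero.mpr (right_ne_zero_of_mul (horbit.trans_ne Nat.card_pos.ne'))
  calc classInner (fun g ↦ piQ N x g * ρ g) (fun g ↦ piQ N x g * ρ g)
      = (Nat.card ((G ⧸ N) →* ℂˣ) : ℂ)⁻¹ * ∑ χ : (G ⧸ N) →* ℂˣ,
          starRingEnd ℂ (χ x : ℂ) * classInner (charMul N χ ρ) ρ := by
        rw [classInner_piQ_mul_piQ_mul, classInner_piQ_mul]
    _ = (Nat.card ((G ⧸ N) →* ℂˣ) : ℂ)⁻¹ * stab := by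
        simp only [hρ.conj_mul_classInner_charMul N hx, Finset.sum_boole, stab,
          Nat.card_eq_fintype_card, Fintype.card_subtype]
    _ = ((qhatOrbit N ρ).ncard : ℂ)⁻¹ := by
        rw [← horbit, Nat.cast_mul, mul_inv, inv_mul_cancel_right₀ hstab]

theorem piq_tensor_selfInner_general
    (G : Type) [Group G] [Fintype G] (N : Subgroup G) [N.Normal]
    (q : G) (ρ : G → ℂ) (hρ : IsIrrChar G ρ) :
    (¬ (∀ χ : (G ⧸ N) →* ℂˣ, charMul N χ ρ = ρ → χ (q : G ⧸ N) = 1) →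
      (fun g : G => piQ N (q : G ⧸ N) g * ρ g) = 0) ∧
    ((∀ χ : (G ⧸ N) →* ℂˣ, charMul N χ ρ = ρ → χ (q : G ⧸ N) = 1) →
      (Fintype.card G : ℂ)⁻¹ *
          ∑ g : G, (piQ N (q : G ⧸ N) g * ρ g) * (starRingEnd ℂ) (piQ N (q : G ⧸ N) g * ρ g)
        = ((qhatOrbit N ρ).ncard : ℂ)⁻¹) := by
  refine ⟨fun h ↦ ?_, fun h ↦ hρ.classInner_piQ_mul_self N h⟩
  push Not at h
  obtain ⟨χ, hχ, hχq⟩ := h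
  exact funext (piQ_mul_eq_zero N hχ hχq)

/-- If `qN` is not in the common kernel of the stabilizer of `ρ` in `Q̂`,
then `π_q ⊗ ρ = 0`; otherwise `⟨π_q ⊗ ρ, π_q ⊗ ρ⟩ = 1/#[ρ]`. -/
theorem piq_tensor_selfInner
    (G : Type) [Group G] [Fintype G] (N : Subgroup G) [N.Normal]
    (hQ : ∀ a b : G ⧸ N, a * b = b * a) (q : G)
    (ρ : G → ℂ) (hρ : IsIrrChar G ρ) :
    (¬ (∀ χ : (G ⧸ N) →* ℂˣ, charMul N χ ρ = ρ → χ (q : G ⧸ N) = 1) →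
      (fun g : G => piQ N (q : G ⧸ N) g * ρ g) = 0) ∧
    ((∀ χ : (G ⧸ N) →* ℂˣ, charMul N χ ρ = ρ → χ (q : G ⧸ N) = 1) →
      (Fintype.card G : ℂ)⁻¹ *
          ∑ g : G, (piQ N (q : G ⧸ N) g * ρ g) * (starRingEnd ℂ) (piQ N (q : G ⧸ N) g * ρ g)
        = ((qhatOrbit N ρ).ncard : ℂ)⁻¹) :=
  piq_tensor_selfInner_general G N q ρ hρ
end

section
/- Let G be a finite group and N a normal subgroup with Q = G/N abelian. Choose a set U of representatives for the Q̂-orbits on Irr G. Then the collection of class functions √(#[ρ]) · (π_q ⊗ ρ), indexed by ρ ∈ U and cosets qN ∈ Q lying in the intersection of the kernels of all χ ∈ Stab(ρ), is an orthonormal basis of the complex vector space of class functions on G (with inner product ⟨f₁,f₂⟩ = (1/#G) Σ_{g∈G} f₁(g) conj(f₂(g))). -/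
open scoped BigOperators

variable {G : Type} [Group G]

/-!
For abelian `Q`, the function `π_x` is the indicator of the coset `x` and, by definition, an average
of the characters in `Q̂`. Hence `⟨π_x ⊗ ρ, π_y ⊗ σ⟩` vanishes for `x ≠ y`, while for `x = y` and
irreducible `ρ`, `σ` orthogonality of characters turns it into `1 / #Q̂` times a sum of values of
those `χ` with `ρ = χ · σ` at `x`, up to conjugation. So distinct orbits are orthogonal, and by
orbit-stabilizer `π_x ⊗ ρ` has squared norm `1 / #[ρ]` when `Stab(ρ)` is trivial on `x`.

If some `χ ∈ Stab(ρ)` has `χ(x) ≠ 1`, then `ρ = χ · ρ` forces `ρ` to vanish on `x`. The remaining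
pieces of `ρ` therefore span all of `[ρ]`, and the irreducible characters span the class functions:
a class function orthogonal to all of them gives a central element of `ℂ[G]` acting by zero on every
simple module.
-/

universe u

section InvariantForm

open scoped ComplexOrder Matrix

variable {n 𝕜 Γ : Type*} [Fintype n] [DecidableEq n] [RCLike 𝕜] [Group Γ] [Finite Γ]

theorem exists_posDef_conjTranspose_mul_mul_eq (M : Γ →* Matrix n n 𝕜) :
    ∃ P : Matrix n n 𝕜, P.PosDef ∧ ∀ g, (M g)ᴴ * P * M g = P := by
  classical
  have : Fintype Γ := Fintype.ofFinite Γ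
  refine ⟨∑ x, (M x)ᴴ * M x, ?_, fun g ↦ ?_⟩
  · rw [← Finset.add_sum_erase _ _ (Finset.mem_univ 1), map_one, Matrix.conjTranspose_one, one_mul]
    exact Matrix.PosDef.one.add_posSemidef
      (Matrix.posSemidef_sum _ fun x _ ↦ Matrix.posSemidef_conjTranspose_mul_self (M x))
  · calc (M g)ᴴ * (∑ x, (M x)ᴴ * M x) * M g = ∑ x, (M (x * g))ᴴ * M (x * g) := by
          simp only [Finset.mul_sum, Finset.sum_mul, map_mul, Matrix.conjTranspose_mul,
            Matrix.mul_assoc]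
      _ = ∑ x, (M x)ᴴ * M x := Equiv.sum_comp (Equiv.mulRight g) fun x ↦ (M x)ᴴ * M x

theorem trace_eq_star_trace_of_conjTranspose_mul_mul_eq {R : Type*} [CommRing R] [StarRing R]
    {A B P : Matrix n n R} (hP : IsUnit P) (hAB : A * B = 1) (hA : Aᴴ * P * A = P) :
    B.trace = star A.trace := by
  have hdet : IsUnit P.det := (Matrix.isUnit_iff_isUnit_det P).1 hP
  have hPB : P * B = Aᴴ * P := by
    nth_rw 1 [← hA]
    rw [Matrix.mul_assoc, hAB, Matrix.mul_one]
  calc B.trace = (P⁻¹ * (Aᴴ * P)).trace := by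
        rw [← hPB, Matrix.nonsing_inv_mul_cancel_left P B hdet]
    _ = Aᴴ.trace := by rw [Matrix.trace_mul_comm, Matrix.mul_nonsing_inv_cancel_right P Aᴴ hdet]
    _ = star A.trace := Matrix.trace_conjTranspose A

theorem character_inv_eq_star {V : Type*} [AddCommGroup V] [Module 𝕜 V] [FiniteDimensional 𝕜 V]
    (ρ : Representation 𝕜 Γ V) (g : Γ) : ρ.character g⁻¹ = star (ρ.character g) := by
  let b := Module.finBasis 𝕜 V
  let M : Γ →* Matrix _ _ 𝕜 := (LinearMap.toMatrixAlgEquiv b).toAlgHom.toMonoidHom.comp ρ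
  have trace_M (x : Γ) : ρ.character x = (M x).trace := LinearMap.trace_eq_matrix_trace 𝕜 b (ρ x)
  obtain ⟨P, hP, hMP⟩ := exists_posDef_conjTranspose_mul_mul_eq M
  rw [trace_M, trace_M]
  exact trace_eq_star_trace_of_conjTranspose_mul_mul_eq hP.isUnit
    (by rw [← map_mul, mul_inv_cancel, map_one]) (hMP g)

end InvariantForm

section CentralElements

variable {k A : Type*} [Field k] [IsAlgClosed k] [CharZero k] [Ring A] [Algebra k A]

theorem smul_eq_zero_of_mem_center_of_trace_eq_zero {M : Type*} [AddCommGroup M] [Module k M]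
    [Module A M] [IsScalarTower k A M] [FiniteDimensional k M] [IsSimpleModule A M] {z : A}
    (hz : z ∈ Submonoid.center A) (htr : LinearMap.trace k M (Algebra.lsmul k k M z) = 0) (m : M) :
    z • m = 0 := by
  -- Schur's lemma: `z` acts as a scalar `c`, so its trace is `c * dim M`.
  let mulZ : Module.End A M :=
    { Algebra.lsmul k k M z with
      map_smul' := fun a m ↦ by simp [smul_smul, Submonoid.mem_center_iff.1 hz a] }
  obtain ⟨c, hc⟩ := (IsSimpleModule.algebraMap_end_bijective_of_isAlgClosed (A := A) k).2 mulZ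
  have hscalar (m : M) : z • m = c • m := (LinearMap.congr_fun hc m).symm
  have htr' : c * Module.finrank k M = 0 := by
    rw [← smul_eq_mul, ← LinearMap.trace_one k M, ← map_smul, ← htr]
    exact congrArg _ (LinearMap.ext fun m ↦ (hscalar m).symm)
  have : Nontrivial M := IsSimpleModule.nontrivial A M
  have hc0 : c = 0 :=
    (mul_eq_zero.1 htr').resolve_right (Nat.cast_ne_zero.2 Module.finrank_pos.ne')
  rw [hscalar, hc0, zero_smul]

theorem eq_zero_of_mem_center_of_forall_isSimpleModule_trace_eq_zero [IsSemisimpleRing A]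
    [FiniteDimensional k A] {z : A} (hz : z ∈ Submonoid.center A)
    (htr : ∀ S : Submodule A A, IsSimpleModule A S →
      LinearMap.trace k S (Algebra.lsmul k k S z) = 0) :
    z = 0 := by
  let mulRight : A →ₗ[A] A := LinearMap.toSpanSingleton A A z
  have simple_le_ker (S : Submodule A A) (hS : IsSimpleModule A S) :
      S ≤ LinearMap.ker mulRight := by
    intro m hm
    have hzm := smul_eq_zero_of_mem_center_of_trace_eq_zero hz (htr S hS) ⟨m, hm⟩
    rw [LinearMap.mem_ker, LinearMap.toSpanSingleton_apply, smul_eq_mul,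
      Submonoid.mem_center_iff.1 hz m]
    exact congrArg Subtype.val hzm
  have ker_eq_top : LinearMap.ker mulRight = ⊤ := by
    rw [eq_top_iff, ← IsSemisimpleModule.sSup_simples_eq_top A A]
    exact sSup_le simple_le_ker
  have hone : mulRight 1 = 0 := LinearMap.mem_ker.1 (ker_eq_top ▸ Submodule.mem_top)
  rwa [LinearMap.toSpanSingleton_apply, one_smul] at hone

end CentralElements

section GroupAlgebra

open scoped MonoidAlgebra

theorem sum_single_mem_center {k Γ : Type*} [CommSemiring k] [Group Γ] [Fintype Γ] {f : Γ → k}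
    (hf : ∀ g h, f (h * g * h⁻¹) = f g) :
    ∑ g, MonoidAlgebra.single g (f g) ∈ Submonoid.center k[Γ] := by
  classical
  refine Submonoid.mem_center_iff.2 fun a ↦ ?_
  induction a using MonoidAlgebra.induction_linear with
  | zero => rw [zero_mul, mul_zero]
  | add x y hx hy => rw [add_mul, mul_add, hx, hy]
  | single h r =>
    simp only [Finset.mul_sum, Finset.sum_mul, MonoidAlgebra.single_mul_single]
    rw [← Equiv.sum_comp (MulAut.conj h).toEquiv fun g ↦ MonoidAlgebra.single (g * h) (f g * r)]
    exact Finset.sum_congr rfl fun g _ ↦ by simp [hf, mul_comm r]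

theorem asAlgebraHom_ofModule' {k Γ M : Type*} [CommSemiring k] [Monoid Γ] [AddCommMonoid M]
    [Module k M] [Module k[Γ] M] [IsScalarTower k k[Γ] M] (z : k[Γ]) :
    (Representation.ofModule' (k := k) (G := Γ) M).asAlgebraHom z = Algebra.lsmul k k M z := by
  simp [Representation.asAlgebraHom, Representation.ofModule']

variable {k Γ M : Type*} [Field k] [Group Γ] [AddCommGroup M] [Module k M] [Module k[Γ] M]
  [IsScalarTower k k[Γ] M]

theorem isIrreducible_ofModule' [IsSimpleModule k[Γ] M] :
    (Representation.ofModule' (k := k) (G := Γ) M).IsIrreducible := by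
  let ρ := Representation.ofModule' (k := k) (G := Γ) M
  let e : ρ.asModule ≃ₗ[k[Γ]] M :=
    { ρ.asModuleEquiv with
      map_smul' := fun a m ↦ by simp [ρ, asAlgebraHom_ofModule'] }
  exact (Representation.irreducible_iff_isSimpleModule_asModule ρ).2 (IsSimpleModule.congr e)

theorem trace_lsmul_sum_single [Fintype Γ] (f : Γ → k) :
    LinearMap.trace k M (Algebra.lsmul k k M (∑ g, MonoidAlgebra.single g (f g) : k[Γ])) =
      ∑ g, f g * (Representation.ofModule' (k := k) (G := Γ) M).character g := by
  simp [← asAlgebraHom_ofModule', Representation.character]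

end GroupAlgebra

section WeightedInner

variable {ι 𝕜 : Type*} [Fintype ι] [RCLike 𝕜]

theorem wInner_cWeight_eq_card_inv_mul_sum (f g : ι → 𝕜) :
    ⟪f, g⟫ₙ_[𝕜] = (Fintype.card ι : 𝕜)⁻¹ * ∑ i, g i * (starRingEnd 𝕜) (f i) := by
  simp [RCLike.wInner, Finset.mul_sum, RCLike.real_smul_eq_coe_mul]

theorem wInner_sum_right {κ : Type*} {E : ι → Type*} [∀ i, SeminormedAddCommGroup (E i)]
    [∀ i, InnerProductSpace 𝕜 (E i)] (w : ι → ℝ) (f : ∀ i, E i) (s : Finset κ)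
    (g : κ → ∀ i, E i) : ⟪f, ∑ j ∈ s, g j⟫_[𝕜, w] = ∑ j ∈ s, ⟪f, g j⟫_[𝕜, w] :=
  map_sum (AddMonoidHom.mk' (fun h ↦ ⟪f, h⟫_[𝕜, w]) (RCLike.wInner_add_right w f)) g s

theorem eq_of_le_of_forall_wInner_eq_zero {V W : Submodule 𝕜 (ι → 𝕜)} (hVW : V ≤ W)
    (h : ∀ f ∈ W, (∀ v ∈ V, ⟪v, f⟫_[𝕜] = 0) → f = 0) : V = W := by
  let e := (WithLp.linearEquiv 2 𝕜 (ι → 𝕜)).symm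
  have compl_eq_bot : (V.map e.toLinearMap)ᗮ ⊓ W.map e.toLinearMap = ⊥ := by
    refine (Submodule.eq_bot_iff _).2 ?_
    rintro _ ⟨hfV, f, hfW, rfl⟩
    have hf : f = 0 := h f hfW fun v hv ↦ by
      rw [RCLike.wInner_one_eq_inner]
      exact hfV _ (Submodule.mem_map_of_mem hv)
    rw [hf, map_zero]
  have hsup := Submodule.sup_orthogonal_inf_of_hasOrthogonalProjection
    (Submodule.map_mono (f := e.toLinearMap) hVW)
  rw [compl_eq_bot, sup_bot_eq] at hsup
  exact Submodule.map_injective_of_injective e.injective hsup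

end WeightedInner

section IrreducibleCharacters

theorem simple_of_isIrreducible {k V Γ : Type u} [Field k] [IsAlgClosed k] [CharZero k]
    [Group Γ] [Finite Γ] [AddCommGroup V] [Module k V] [FiniteDimensional k V]
    (ρ : Representation k Γ V) [ρ.IsIrreducible] : CategoryTheory.Simple (FDRep.of ρ) := by
  have : Fintype Γ := Fintype.ofFinite Γ
  have hcard : (Nat.card Γ : k) ≠ 0 := Nat.cast_ne_zero.2 Nat.card_pos.ne'
  have : Invertible (Nat.card Γ : k) := invertibleOfNonzero hcard
  have hnorm := Representation.char_orthonormal ρ ρ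
  rw [if_pos ⟨Representation.Equiv.refl ρ⟩, inv_mul_eq_one₀ hcard] at hnorm
  exact (FDRep.simple_iff_char_is_norm_one (FDRep.of ρ)).2 hnorm.symm

open scoped MonoidAlgebra in
theorem eq_zero_of_forall_sum_mul_irrChar_eq_zero [Fintype G] {f : G → ℂ}
    (hf : f ∈ classFunSubmodule G) (h : ∀ ρ, IsIrrChar G ρ → ∑ g, f g * ρ g = 0) : f = 0 := by
  have sum_eq_zero : (∑ g, MonoidAlgebra.single g (f g) : ℂ[G]) = 0 := by
    refine eq_zero_of_mem_center_of_forall_isSimpleModule_trace_eq_zero (k := ℂ)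
      (sum_single_mem_center hf) fun S hS ↦ ?_
    have := isIrreducible_ofModule' (k := ℂ) (Γ := G) (M := S)
    rw [trace_lsmul_sum_single]
    exact h _ ⟨_, simple_of_isIrreducible (Representation.ofModule' S), rfl⟩
  classical
  funext g
  simpa [Finsupp.single_apply] using congrArg (fun z : ℂ[G] ↦ z.coeff g) sum_eq_zero

theorem IsIrrChar.mem_classFunSubmodule {ρ : G → ℂ} (hρ : IsIrrChar G ρ) :
    ρ ∈ classFunSubmodule G := by
  obtain ⟨V, -, rfl⟩ := hρ
  exact FDRep.char_conj V

theorem span_isIrrChar (G : Type) [Group G] [Finite G] :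
    Submodule.span ℂ {ρ | IsIrrChar G ρ} = classFunSubmodule G := by
  have : Fintype G := Fintype.ofFinite G
  refine eq_of_le_of_forall_wInner_eq_zero
    (Submodule.span_le.2 fun _ ↦ IsIrrChar.mem_classFunSubmodule) fun f hf hperp ↦ ?_
  have hstar : star f = 0 := by
    refine eq_zero_of_forall_sum_mul_irrChar_eq_zero (fun g h ↦ congrArg star (hf g h))
      fun ρ hρ ↦ ?_
    have hperp' : ⟪f, ρ⟫_[ℂ] = 0 := by
      rw [← RCLike.conj_wInner_symm, hperp ρ (Submodule.subset_span hρ), map_zero]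
    simpa [RCLike.wInner_one_eq_sum, mul_comm] using hperp'
  exact star_eq_zero.1 hstar

theorem wInner_irrChar [Fintype G] {ρ σ : G → ℂ} [Decidable (ρ = σ)] (hρ : IsIrrChar G ρ)
    (hσ : IsIrrChar G σ) : ⟪ρ, σ⟫ₙ_[ℂ] = if ρ = σ then 1 else 0 := by
  classical
  have : Invertible (Nat.card G : ℂ) := invertibleOfNonzero (Nat.cast_ne_zero.2 Nat.card_pos.ne')
  obtain ⟨V, hV, rfl⟩ := hρ
  obtain ⟨W, hW, rfl⟩ := hσ
  have wInner_eq (X Y : FDRep ℂ G) [CategoryTheory.Simple X] [CategoryTheory.Simple Y] :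
      ⟪X.character, Y.character⟫ₙ_[ℂ] = if Nonempty (Y ≅ X) then 1 else 0 := by
    rw [← FDRep.char_orthonormal Y X, wInner_cWeight_eq_card_inv_mul_sum, Nat.card_eq_fintype_card]
    exact congrArg _ (Finset.sum_congr rfl fun g _ ↦ congrArg _ (character_inv_eq_star X.ρ g).symm)
  by_cases hWV : Nonempty (W ≅ V)
  · rw [wInner_eq, if_pos hWV, if_pos (FDRep.char_iso hWV.some).symm]
  · have hne : V.character ≠ W.character := fun heq ↦ by
      have hVW := wInner_eq V W
      rw [if_neg hWV, ← heq, wInner_eq V V, if_pos ⟨CategoryTheory.Iso.refl V⟩] at hVW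
      exact one_ne_zero hVW
    rw [wInner_eq, if_neg hWV, if_neg hne]

end IrreducibleCharacters

/-- The twist `χ ⊗ ρ` of a representation by a linear character, on the space of `ρ` itself. -/
def twist {k Γ V : Type*} [CommSemiring k] [Monoid Γ] [AddCommMonoid V] [Module k V]
    (χ : Γ →* kˣ) (ρ : Representation k Γ V) : Representation k Γ V where
  toFun g := χ g • ρ g
  map_one' := by rw [map_one, map_one, one_smul]
  map_mul' g h := by rw [map_mul, map_mul, smul_mul_smul_comm]

theorem character_twist {k Γ V : Type*} [Field k] [Monoid Γ] [AddCommGroup V] [Module k V]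
    (χ : Γ →* kˣ) (ρ : Representation k Γ V) (g : Γ) :
    (twist χ ρ).character g = χ g * ρ.character g :=
  map_smul (LinearMap.trace k V) (χ g : k) (ρ g)

section DualAction

variable (N : Subgroup G) [N.Normal]

/-- The twisting action of `Q̂ = Hom(G ⧸ N, ℂˣ)` on functions on `G`. -/
instance : MulAction ((G ⧸ N) →* ℂˣ) (G → ℂ) where
  smul := charMul N
  one_smul ρ := by
    funext g
    exact one_mul (ρ g)
  mul_smul χ ψ ρ := by
    funext g
    exact mul_assoc (χ g : ℂ) (ψ g) (ρ g)

variable {N}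

theorem dual_smul_apply (χ : (G ⧸ N) →* ℂˣ) (ρ : G → ℂ) (g : G) : (χ • ρ) g = χ g * ρ g := rfl

theorem qhatOrbit_eq_orbit (ρ : G → ℂ) :
    qhatOrbit N ρ = MulAction.orbit ((G ⧸ N) →* ℂˣ) ρ :=
  Set.ext fun _ ↦ exists_congr fun _ ↦ eq_comm

theorem ncard_qhatOrbit_ne_zero [Finite (G ⧸ N)] (ρ : G → ℂ) : (qhatOrbit N ρ).ncard ≠ 0 := by
  rw [qhatOrbit_eq_orbit]
  exact Set.ncard_ne_zero_of_mem (MulAction.mem_orbit_self ρ) (Set.finite_range _)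

theorem IsIrrChar.smul [Finite G] {ρ : G → ℂ} (hρ : IsIrrChar G ρ) (χ : (G ⧸ N) →* ℂˣ) :
    IsIrrChar G (χ • ρ) := by
  have : Fintype G := Fintype.ofFinite G
  obtain ⟨V, hV, rfl⟩ := hρ
  let W := FDRep.of (twist (χ.comp (QuotientGroup.mk' N)) V.ρ)
  have hW : W.character = χ • V.character := funext fun g ↦ character_twist _ V.ρ g
  refine ⟨W, ?_, hW.symm⟩
  have norm_eq (g : G) : W.character g * W.character g⁻¹ =
      V.character g * V.character g⁻¹ := by
    have hχ : (χ g : ℂ) * χ (g⁻¹ : G) = 1 := by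
      rw [QuotientGroup.mk_inv, map_inv, Units.mul_inv]
    rw [hW, dual_smul_apply, dual_smul_apply, mul_mul_mul_comm, hχ, one_mul]
  rw [FDRep.simple_iff_char_is_norm_one] at hV ⊢
  rw [← hV]
  exact Finset.sum_congr rfl fun g _ ↦ norm_eq g

end DualAction

section CosetProjection

open scoped IsMulCommutative

theorem conj_apply_eq_apply_inv {Q : Type*} [Group Q] [Finite Q] (χ : Q →* ℂˣ) (x : Q) :
    (starRingEnd ℂ) (χ x) = χ x⁻¹ := by
  have hnorm : ‖(χ x : ℂ)‖ = 1 := by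
    refine Complex.norm_eq_one_of_pow_eq_one (n := Nat.card Q) ?_ Nat.card_pos.ne'
    rw [← Units.val_pow_eq_pow_val, ← map_pow, pow_card_eq_one', map_one, Units.val_one]
  rw [map_inv, Units.val_inv_eq_inv_val, Complex.inv_eq_conj hnorm]

theorem sum_apply_eq_ite {Q : Type*} [CommGroup Q] [Finite Q] [Fintype (Q →* ℂˣ)] (x : Q)
    [Decidable (x = 1)] :
    ∑ χ : Q →* ℂˣ, (χ x : ℂ) = if x = 1 then (Nat.card (Q →* ℂˣ) : ℂ) else 0 := by
  classical
  let evalAt : (Q →* ℂˣ) →* ℂ := (Units.coeHom ℂ).comp (MonoidHom.eval x)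
  have evalAt_eq_one : evalAt = 1 ↔ x = 1 := by
    rw [← CommGroup.forall_apply_eq_apply_iff Q (M := ℂ)]
    simp [evalAt, DFunLike.ext_iff]
  calc ∑ χ : Q →* ℂˣ, (χ x : ℂ) = ∑ χ, evalAt χ := rfl
    _ = if x = 1 then (Nat.card (Q →* ℂˣ) : ℂ) else 0 := by
      rw [sum_hom_units, Nat.card_eq_fintype_card, Nat.cast_ite, Nat.cast_zero]
      exact if_congr evalAt_eq_one rfl rfl

variable {N : Subgroup G} [N.Normal]

theorem piQ_apply [Finite (G ⧸ N)] [IsMulCommutative (G ⧸ N)] (x : G ⧸ N) (g : G)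
    [Decidable ((g : G ⧸ N) = x)] :
    piQ N x g = if (g : G ⧸ N) = x then 1 else 0 := by
  classical
  have : Fintype ((G ⧸ N) →* ℂˣ) := Fintype.ofFinite _
  have hcard : (Nat.card ((G ⧸ N) →* ℂˣ) : ℂ) ≠ 0 := Nat.cast_ne_zero.2 Nat.card_pos.ne'
  simp only [piQ, finsum_eq_sum_of_fintype, conj_apply_eq_apply_inv, ← Units.val_mul, ← map_mul]
  rw [sum_apply_eq_ite, mul_ite, inv_mul_cancel₀ hcard, mul_zero]
  exact if_congr (inv_mul_eq_one.trans eq_comm) rfl rfl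

theorem piQ_mul_eq_sum [Fintype ((G ⧸ N) →* ℂˣ)] (x : G ⧸ N) (ρ : G → ℂ) :
    piQ N x * ρ = (Nat.card ((G ⧸ N) →* ℂˣ) : ℂ)⁻¹ •
      ∑ χ : (G ⧸ N) →* ℂˣ, (starRingEnd ℂ) (χ x) • χ • ρ := by
  funext g
  simp only [Pi.mul_apply, Pi.smul_apply, Finset.sum_apply, dual_smul_apply, piQ,
    finsum_eq_sum_of_fintype, smul_eq_mul, Finset.sum_mul, mul_assoc]

end CosetProjection

section CosetPieces

variable {N : Subgroup G} [N.Normal]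

theorem piQ_mul_mem_classFunSubmodule (x : G ⧸ N) {ρ : G → ℂ} (hρ : ρ ∈ classFunSubmodule G) :
    piQ N x * ρ ∈ classFunSubmodule G := by
  intro g h
  have piQ_conj : piQ N x (h * g * h⁻¹) = piQ N x g := by
    simp only [piQ, QuotientGroup.mk_mul, QuotientGroup.mk_inv, map_mul, map_inv,
      mul_inv_cancel_comm]
  rw [Pi.mul_apply, Pi.mul_apply, piQ_conj, hρ g h]

theorem smul_eq_sum_piQ_mul [Fintype (G ⧸ N)] [IsMulCommutative (G ⧸ N)]
    (χ : (G ⧸ N) →* ℂˣ) (ρ : G → ℂ) : χ • ρ = ∑ x, (χ x : ℂ) • (piQ N x * ρ) := by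
  classical
  funext g
  simp only [dual_smul_apply, Finset.sum_apply, Pi.smul_apply, Pi.mul_apply, smul_eq_mul, piQ_apply,
    ite_mul, one_mul, zero_mul, mul_ite, mul_zero, Finset.sum_ite_eq, Finset.mem_univ, if_true]

theorem piQ_mul_eq_zero_of_smul_eq_self [Finite (G ⧸ N)] [IsMulCommutative (G ⧸ N)]
    {χ : (G ⧸ N) →* ℂˣ} {ρ : G → ℂ} (hχ : χ • ρ = ρ) {x : G ⧸ N} (hx : χ x ≠ 1) :
    piQ N x * ρ = 0 := by
  classical
  funext g
  rw [Pi.mul_apply, piQ_apply]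
  split_ifs with hg
  · have hρg : (χ g : ℂ) * ρ g = ρ g := congrFun hχ g
    rw [hg, mul_left_eq_self₀, Units.val_eq_one] at hρg
    rw [hρg.resolve_left hx, mul_zero, Pi.zero_apply]
  · exact zero_mul _

variable (N) in
/-- The class function `√#[ρ] · (π_x ⊗ ρ)`, of norm one when `ρ` is an irreducible character and
`Stab(ρ)` is trivial on `x`. -/
noncomputable def cosetPiece (x : G ⧸ N) (ρ : G → ℂ) : G → ℂ :=
  (Real.sqrt (qhatOrbit N ρ).ncard : ℂ) • (piQ N x * ρ)

theorem cosetPiece_mem_classFunSubmodule (x : G ⧸ N) {ρ : G → ℂ}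
    (hρ : ρ ∈ classFunSubmodule G) : cosetPiece N x ρ ∈ classFunSubmodule G :=
  Submodule.smul_mem _ _ (piQ_mul_mem_classFunSubmodule x hρ)

theorem smul_mem_span_cosetPiece [Finite (G ⧸ N)] [IsMulCommutative (G ⧸ N)]
    (χ : (G ⧸ N) →* ℂˣ) (ρ : G → ℂ) :
    χ • ρ ∈ Submodule.span ℂ
      {f | ∃ x : G ⧸ N, (∀ ψ : (G ⧸ N) →* ℂˣ, ψ • ρ = ρ → ψ x = 1) ∧ f = cosetPiece N x ρ} := by
  have : Fintype (G ⧸ N) := Fintype.ofFinite _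
  have hsqrt : (Real.sqrt (qhatOrbit N ρ).ncard : ℂ) ≠ 0 := by
    simp [ncard_qhatOrbit_ne_zero]
  rw [smul_eq_sum_piQ_mul χ ρ]
  refine Submodule.sum_mem _ fun x _ ↦ Submodule.smul_mem _ _ ?_
  by_cases hx : ∀ ψ : (G ⧸ N) →* ℂˣ, ψ • ρ = ρ → ψ x = 1
  · rw [← Submodule.smul_mem_iff _ hsqrt]
    exact Submodule.subset_span ⟨x, hx, rfl⟩
  · push Not at hx
    obtain ⟨ψ, hψ, hψx⟩ := hx
    rw [piQ_mul_eq_zero_of_smul_eq_self hψ hψx]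
    exact Submodule.zero_mem _

end CosetPieces

section Orthogonality

variable [Fintype G] {N : Subgroup G} [N.Normal]

theorem wInner_piQ_mul_piQ_mul [IsMulCommutative (G ⧸ N)] (x y : G ⧸ N) [Decidable (x = y)]
    (ρ σ : G → ℂ) : ⟪piQ N x * ρ, piQ N y * σ⟫ₙ_[ℂ] =
      if x = y then ⟪ρ, piQ N y * σ⟫ₙ_[ℂ] else 0 := by
  classical
  simp only [wInner_cWeight_eq_card_inv_mul_sum, Pi.mul_apply, piQ_apply]
  split_ifs with hxy
  · subst hxy
    refine congrArg _ (Finset.sum_congr rfl fun g _ ↦ ?_)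
    split_ifs <;> simp
  · rw [Finset.sum_eq_zero fun g _ ↦ ?_, mul_zero]
    split_ifs with hy hx
    · exact absurd (hx.symm.trans hy) hxy
    all_goals simp

theorem wInner_irrChar_piQ_mul [Fintype ((G ⧸ N) →* ℂˣ)] {ρ σ : G → ℂ}
    [DecidablePred fun χ : (G ⧸ N) →* ℂˣ ↦ ρ = χ • σ] (hρ : IsIrrChar G ρ) (hσ : IsIrrChar G σ)
    (x : G ⧸ N) : ⟪ρ, piQ N x * σ⟫ₙ_[ℂ] = (Nat.card ((G ⧸ N) →* ℂˣ) : ℂ)⁻¹ *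
      ∑ χ : (G ⧸ N) →* ℂˣ with ρ = χ • σ, (starRingEnd ℂ) (χ x) := by
  calc ⟪ρ, piQ N x * σ⟫ₙ_[ℂ]
    _ = (Nat.card ((G ⧸ N) →* ℂˣ) : ℂ)⁻¹ *
        ∑ χ : (G ⧸ N) →* ℂˣ, (starRingEnd ℂ) (χ x) * ⟪ρ, χ • σ⟫ₙ_[ℂ] := by
      simp only [piQ_mul_eq_sum, RCLike.wInner_smul_right, wInner_sum_right, smul_eq_mul]
    _ = _ := by
      simp only [wInner_irrChar hρ (hσ.smul _), mul_ite, mul_one, mul_zero, Finset.sum_filter]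

theorem wInner_piQ_mul_eq_zero [IsMulCommutative (G ⧸ N)] {ρ σ : G → ℂ} {x y : G ⧸ N}
    (hρ : IsIrrChar G ρ) (hσ : IsIrrChar G σ) (h : x = y → qhatOrbit N ρ ≠ qhatOrbit N σ) :
    ⟪piQ N x * ρ, piQ N y * σ⟫ₙ_[ℂ] = 0 := by
  classical
  have : Fintype ((G ⧸ N) →* ℂˣ) := Fintype.ofFinite _
  rw [wInner_piQ_mul_piQ_mul]
  split_ifs with hxy
  · have ne_smul (χ : (G ⧸ N) →* ℂˣ) : ρ ≠ χ • σ := fun hρσ ↦ h hxy <| by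
      rw [hρσ, qhatOrbit_eq_orbit, qhatOrbit_eq_orbit, MulAction.orbit_smul]
    simp [wInner_irrChar_piQ_mul hρ hσ, ne_smul]
  · rfl

theorem wInner_piQ_mul_self [IsMulCommutative (G ⧸ N)] {ρ : G → ℂ} {x : G ⧸ N}
    (hρ : IsIrrChar G ρ) (hx : ∀ χ : (G ⧸ N) →* ℂˣ, χ • ρ = ρ → χ x = 1) :
    ⟪piQ N x * ρ, piQ N x * ρ⟫ₙ_[ℂ] = ((qhatOrbit N ρ).ncard : ℂ)⁻¹ := by
  classical
  have : Fintype ((G ⧸ N) →* ℂˣ) := Fintype.ofFinite _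
  let S := MulAction.stabilizer ((G ⧸ N) →* ℂˣ) ρ
  have sum_eq_card : ∑ χ : (G ⧸ N) →* ℂˣ with ρ = χ • ρ, (starRingEnd ℂ) (χ x) =
      (Nat.card S : ℂ) := by
    have conj_eq_one (χ) (hχ : χ ∈ Finset.univ.filter fun χ : (G ⧸ N) →* ℂˣ ↦ ρ = χ • ρ) :
        (starRingEnd ℂ) (χ x) = 1 := by
      rw [hx χ (Finset.mem_filter.1 hχ).2.symm, Units.val_one, map_one]
    rw [Finset.sum_congr rfl conj_eq_one]
    simp [S, Nat.card_eq_fintype_card, Fintype.card_subtype, eq_comm]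
  have orbit_stabilizer : ((qhatOrbit N ρ).ncard : ℂ) * Nat.card S =
      Nat.card ((G ⧸ N) →* ℂˣ) := by
    rw [qhatOrbit_eq_orbit, ← MulAction.index_stabilizer, ← Nat.cast_mul, S.index_mul_card]
  have hS : (Nat.card S : ℂ) ≠ 0 := Nat.cast_ne_zero.2 Nat.card_pos.ne'
  rw [wInner_piQ_mul_piQ_mul, if_pos rfl, wInner_irrChar_piQ_mul hρ hρ, sum_eq_card,
    ← orbit_stabilizer, mul_inv, inv_mul_cancel_right₀ hS]

theorem wInner_cosetPiece (x y : G ⧸ N) (ρ σ : G → ℂ) :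
    ⟪cosetPiece N x ρ, cosetPiece N y σ⟫ₙ_[ℂ] = Real.sqrt (qhatOrbit N σ).ncard *
      (Real.sqrt (qhatOrbit N ρ).ncard * ⟪piQ N x * ρ, piQ N y * σ⟫ₙ_[ℂ]) := by
  rw [cosetPiece, cosetPiece, RCLike.wInner_smul_right, RCLike.wInner_smul_left, smul_eq_mul,
    smul_eq_mul, RCLike.star_def, Complex.conj_ofReal]

theorem wInner_cosetPiece_eq_zero [IsMulCommutative (G ⧸ N)] {ρ σ : G → ℂ} {x y : G ⧸ N}
    (hρ : IsIrrChar G ρ) (hσ : IsIrrChar G σ) (h : x = y → qhatOrbit N ρ ≠ qhatOrbit N σ) :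
    ⟪cosetPiece N x ρ, cosetPiece N y σ⟫ₙ_[ℂ] = 0 := by
  rw [wInner_cosetPiece, wInner_piQ_mul_eq_zero hρ hσ h, mul_zero, mul_zero]

theorem wInner_cosetPiece_self [IsMulCommutative (G ⧸ N)] {ρ : G → ℂ} {x : G ⧸ N}
    (hρ : IsIrrChar G ρ) (hx : ∀ χ : (G ⧸ N) →* ℂˣ, χ • ρ = ρ → χ x = 1) :
    ⟪cosetPiece N x ρ, cosetPiece N x ρ⟫ₙ_[ℂ] = 1 := by
  rw [wInner_cosetPiece, wInner_piQ_mul_self hρ hx, ← mul_assoc, ← Complex.ofReal_mul,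
    Real.mul_self_sqrt (Nat.cast_nonneg _), Complex.ofReal_natCast]
  exact mul_inv_cancel₀ (Nat.cast_ne_zero.2 (ncard_qhatOrbit_ne_zero ρ))

end Orthogonality

/-- The class functions `√(#[ρ]) · (π_x ⊗ ρ)`, indexed by orbit
representatives `ρ ∈ U` and cosets `x ∈ Q` in the common kernel of `Stab(ρ)`, form an
orthonormal basis of the space of class functions on `G`. -/
theorem orthonormal_basis_classFun
    (G : Type) [Group G] [Fintype G] (N : Subgroup G) [N.Normal]
    (hQ : ∀ a b : G ⧸ N, a * b = b * a)
    (U : Set (G → ℂ))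
    (hU1 : ∀ ρ ∈ U, IsIrrChar G ρ)
    (hU2 : ∀ ρ ∈ U, ∀ ρ' ∈ U, qhatOrbit N ρ = qhatOrbit N ρ' → ρ = ρ')
    (hU3 : ∀ ρ : G → ℂ, IsIrrChar G ρ → ∃ ρ' ∈ U, ρ ∈ qhatOrbit N ρ')
    (B : {p : (G → ℂ) × (G ⧸ N) //
        p.1 ∈ U ∧ ∀ χ : (G ⧸ N) →* ℂˣ, charMul N χ p.1 = p.1 → χ p.2 = 1} → G → ℂ)
    (hB : ∀ i, B i = fun g =>
      (Real.sqrt ((qhatOrbit N i.1.1).ncard : ℝ) : ℂ) * (piQ N i.1.2 g * i.1.1 g)) :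
    (∀ i, B i ∈ classFunSubmodule G) ∧
    (∀ i j, i = j →
      (Fintype.card G : ℂ)⁻¹ * ∑ g : G, B i g * (starRingEnd ℂ) (B j g) = 1) ∧
    (∀ i j, i ≠ j →
      (Fintype.card G : ℂ)⁻¹ * ∑ g : G, B i g * (starRingEnd ℂ) (B j g) = 0) ∧
    Submodule.span ℂ (Set.range B) = classFunSubmodule G := by
  have : IsMulCommutative (G ⧸ N) := ⟨⟨hQ⟩⟩
  have B_eq (i) : B i = cosetPiece N i.1.2 i.1.1 := hB i
  have B_mem (i) : B i ∈ classFunSubmodule G := by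
    rw [B_eq]
    exact cosetPiece_mem_classFunSubmodule _ (hU1 _ i.2.1).mem_classFunSubmodule
  simp only [← wInner_cWeight_eq_card_inv_mul_sum]
  refine ⟨B_mem, ?_, fun i j hij ↦ ?_, le_antisymm ?_ ?_⟩
  · rintro i _ rfl
    rw [B_eq, wInner_cosetPiece_self (hU1 _ i.2.1) i.2.2]
  · rw [B_eq, B_eq]
    refine wInner_cosetPiece_eq_zero (hU1 _ j.2.1) (hU1 _ i.2.1) fun hx horbit ↦ hij ?_
    exact Subtype.ext (Prod.ext (hU2 _ i.2.1 _ j.2.1 horbit.symm) hx.symm)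
  · exact Submodule.span_le.2 (Set.range_subset_iff.2 B_mem)
  · rw [← span_isIrrChar, Submodule.span_le]
    intro ρ hρ
    obtain ⟨σ, hσ, χ, rfl⟩ := hU3 ρ hρ
    refine Submodule.span_mono ?_ (smul_mem_span_cosetPiece χ σ)
    rintro _ ⟨x, hx, rfl⟩
    exact ⟨⟨(σ, x), hσ, hx⟩, B_eq _⟩
end
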